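/- Let (T_i)_{i=1}^∞ be a sequence of bounded linear operators from a Banach space X to a normed linear space Y. The following are equivalent: (1) (T_i) is mean sensitive; (2) there exists x∈X with limsup_{n→∞} (1/n)∑_{i=1}^n ‖T_i x‖ = ∞; (3) the set {x∈X : limsup_{n→∞} (1/n)∑_{i=1}^n ‖T_i x‖ = ∞} is residual (comeagre) in X; (4) the set {(x,y)∈X×X : limsup_{n→∞} (1/n)∑_{i=1}^n ‖T_i(x−y)‖ = ∞} is residual in X×X; (5) there exist a bounded sequence (y_k) in X and a sequence (N_k) in ℕ such that sup_k (1/N_k)∑_{i=1}^{N_k} ‖T_i y_k‖ = ∞; (6) there exist a sequence (y_k) in X with y_k → 0 and a sequence (N_k) in ℕ such that liminf_{k→∞} (1/N_k)∑_{i=1}^{N_k} ‖T_i y_k‖ > 0. -/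

import Mathlib

open Filter Topology

variable {X Y : Type*} [NormedAddCommGroup X] [NormedSpace ℝ X]
  [NormedAddCommGroup Y] [NormedSpace ℝ Y]

/-- The Cesàro average `(1/n) ∑_{i=1}^{n} ‖T i x - T i y‖`. -/
noncomputable def mavg (T : ℕ → X →L[ℝ] Y) (x y : X) (n : ℕ) : ℝ :=
  (∑ i ∈ Finset.Icc 1 n, ‖T i x - T i y‖) / n

/-- The Cesàro average `(1/n) ∑_{i=1}^{n} ‖T i x‖`. -/
noncomputable def avg (T : ℕ → X →L[ℝ] Y) (x : X) (n : ℕ) : ℝ :=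
  (∑ i ∈ Finset.Icc 1 n, ‖T i x‖) / n

/-- `limsup_n (1/n) ∑_{i=1}^{n} ‖T i x - T i y‖`, computed in `EReal`. -/
noncomputable def msup (T : ℕ → X →L[ℝ] Y) (x y : X) : EReal :=
  Filter.limsup (fun n => (mavg T x y n : EReal)) Filter.atTop

/-- `liminf_n (1/n) ∑_{i=1}^{n} ‖T i x - T i y‖`, computed in `EReal`. -/
noncomputable def minf (T : ℕ → X →L[ℝ] Y) (x y : X) : EReal :=
  Filter.liminf (fun n => (mavg T x y n : EReal)) Filter.atTop

/-- `limsup_n (1/n) ∑_{i=1}^{n} ‖T i x‖`, computed in `EReal`. -/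
noncomputable def asup (T : ℕ → X →L[ℝ] Y) (x : X) : EReal :=
  Filter.limsup (fun n => (avg T x n : EReal)) Filter.atTop

/-- `liminf_n (1/n) ∑_{i=1}^{n} ‖T i x‖`, computed in `EReal`. -/
noncomputable def ainf (T : ℕ → X →L[ℝ] Y) (x : X) : EReal :=
  Filter.liminf (fun n => (avg T x n : EReal)) Filter.atTop

/-- Mean sensitivity of the sequence `(T i)`. -/
def MeanSensitive (T : ℕ → X →L[ℝ] Y) : Prop :=
  ∃ δ : ℝ, 0 < δ ∧ ∀ x : X, ∀ ε : ℝ, 0 < ε →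
    ∃ y : X, ‖x - y‖ < ε ∧ (δ : EReal) < msup T x y

/-! If a family of seminorms is unbounded on a bounded set, it is uniformly bounded on no nonempty
open set: a bound near `x` gives, by translation to the origin, a bound near `0`, and a
neighbourhood of `0` absorbs the bounded set. By lower semicontinuity the points where the family is
unbounded therefore form a residual set. This applies to the Cesàro averages of `‖T i x‖`, which
are continuous seminorms. Residuality passes from `X` to `X × X` along the open map
`(x, y) ↦ x - y`, and a residual set in a Baire space is nonempty. Mean sensitivity at the origin
gives null sequences with averages bounded away from zero, and normalizing such a sequence makes
the averages blow up on the unit ball. -/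

section Topology

theorem isOpenMap_fst_sub_snd {G : Type*} [AddGroup G] [TopologicalSpace G] [ContinuousAdd G] :
    IsOpenMap fun p : G × G => p.1 - p.2 :=
  IsOpenMap.of_sections fun p =>
    ⟨fun z => (z + p.2, p.2), by fun_prop, by simp, fun z => add_sub_cancel_right z p.2⟩

theorem limsup_coe_eq_top_iff {α : Type*} {l : Filter α} {u : α → ℝ} :
    limsup (fun a => (u a : EReal)) l = ⊤ ↔ ¬ l.IsBoundedUnder (· ≤ ·) u := by
  constructor
  · rintro h ⟨R, hR⟩
    have hle : limsup (fun a => (u a : EReal)) l ≤ R :=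
      limsup_le_of_le (by isBoundedDefault)
        ((eventually_map.1 hR).mono fun a ha => EReal.coe_le_coe_iff.2 ha)
    exact (hle.trans_lt (EReal.coe_lt_top R)).ne h
  · contrapose!
    intro h
    obtain ⟨R, hR, -⟩ := EReal.lt_iff_exists_real_btwn.1 (lt_top_iff_ne_top.2 h)
    exact isBoundedUnder_of_eventually_le
      ((eventually_lt_of_limsup_lt hR).mono fun a ha => (EReal.coe_lt_coe_iff.1 ha).le)

end Topology

section Seminorm

variable {ι 𝕜 E : Type*}

theorem bddAbove_range_seminorm_smul_iff [NormedField 𝕜] [AddCommGroup E] [Module 𝕜 E]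
    (p : ι → Seminorm 𝕜 E) {c : 𝕜} (hc : c ≠ 0) (x : E) :
    BddAbove (Set.range fun i => p i (c • x)) ↔ BddAbove (Set.range fun i => p i x) := by
  simp only [map_smul_eq_mul, ← smul_eq_mul, Set.range_smul,
    bddAbove_smul_iff_of_pos (norm_pos_iff.2 hc)]

section CondensationOfSingularities

variable [NontriviallyNormedField 𝕜] [AddCommGroup E] [Module 𝕜 E] [TopologicalSpace E]
  [IsTopologicalAddGroup E] {p : ι → Seminorm 𝕜 E} {s : Set E}

theorem exists_forall_seminorm_le_of_eventually_le (hs : Bornology.IsVonNBounded 𝕜 s)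
    {x : E} {R : ℝ} (h : ∀ᶠ y in 𝓝 x, ∀ i, p i y ≤ R) : ∃ C, ∀ i, ∀ y ∈ s, p i y ≤ C := by
  have h_zero : ∀ᶠ v in 𝓝 (0 : E), ∀ i, p i v ≤ R + R := by
    rw [← map_add_left_nhds_zero x, eventually_map] at h
    filter_upwards [h] with v hv i
    calc p i v = p i (x + v - x) := by rw [add_sub_cancel_left]
      _ ≤ p i (x + v) + p i x := map_sub_le_add _ _ _
      _ ≤ R + R := add_le_add (hv i) (by simpa using h.self_of_nhds i)
  obtain ⟨c, hc⟩ := (hs h_zero).exists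
  refine ⟨‖c‖ * (R + R), fun i y hy => ?_⟩
  obtain ⟨v, hv, rfl⟩ := hc hy
  simpa only [map_smul_eq_mul] using mul_le_mul_of_nonneg_left (hv i) (norm_nonneg c)

theorem dense_setOf_exists_lt_seminorm (hs : Bornology.IsVonNBounded 𝕜 s)
    (h : ∀ R : ℝ, ∃ i, ∃ x ∈ s, R < p i x) (R : ℝ) : Dense {x | ∃ i, R < p i x} := by
  intro x
  rw [mem_closure_iff_frequently]
  by_contra hx
  obtain ⟨C, hC⟩ := exists_forall_seminorm_le_of_eventually_le hs (x := x) (R := R) (p := p)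
    (by simpa using hx)
  obtain ⟨i, y, hy, hlt⟩ := h C
  exact (hC i y hy).not_gt hlt

theorem residual_setOf_not_bddAbove_range_seminorm (hp : ∀ i, LowerSemicontinuous (p i))
    (hs : Bornology.IsVonNBounded 𝕜 s) (h : ∀ R : ℝ, ∃ i, ∃ x ∈ s, R < p i x) :
    {x | ¬ BddAbove (Set.range fun i => p i x)} ∈ residual E := by
  have h_nat (k : ℕ) : ∀ᶠ x in residual E, ∃ i, (k : ℝ) < p i x := by
    refine residual_of_dense_open ?_ (dense_setOf_exists_lt_seminorm hs h k)
    rw [Set.ofPred_exists]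
    exact isOpen_iUnion fun i => (hp i).isOpen_preimage k
  filter_upwards [eventually_countable_forall.2 h_nat] with x hx
  refine not_bddAbove_iff.2 fun R => ?_
  obtain ⟨k, hk⟩ := exists_nat_gt R
  obtain ⟨i, hi⟩ := hx k
  exact ⟨_, ⟨i, rfl⟩, hk.trans hi⟩

end CondensationOfSingularities

theorem tendsto_seminorm_normalize_atTop [NormedAddCommGroup E] [NormedSpace ℝ E] {l : Filter ι}
    {p : ι → Seminorm ℝ E} {y : ι → E} {c : ℝ} (hc : 0 < c) (hy : Tendsto y l (𝓝 0))
    (hp : ∀ᶠ k in l, c ≤ p k (y k)) :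
    Tendsto (fun k => p k (NormedSpace.normalize (y k))) l atTop := by
  have hy_ne : ∀ᶠ k in l, y k ≠ 0 := by
    filter_upwards [hp] with k hk h0
    rw [h0, map_zero] at hk
    exact hk.not_gt hc
  have h_inv : Tendsto (fun k => ‖y k‖⁻¹) l atTop :=
    (tendsto_nhdsWithin_iff.2 ⟨tendsto_zero_iff_norm_tendsto_zero.1 hy,
      hy_ne.mono fun k => norm_pos_iff.2⟩).inv_tendsto_nhdsGT_zero
  refine tendsto_atTop_mono' l ?_ (h_inv.atTop_mul_const hc)
  filter_upwards [hp] with k hk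
  rw [NormedSpace.normalize, map_smul_eq_mul, norm_inv, norm_norm]
  gcongr

theorem norm_normalize_le_one [NormedAddCommGroup E] [NormedSpace ℝ E] (x : E) :
    ‖NormedSpace.normalize x‖ ≤ 1 := by
  rw [NormedSpace.normalize, norm_smul, norm_inv, norm_norm]
  exact inv_mul_le_one

end Seminorm

section Average

/-- The Cesàro average `x ↦ (1/n) ∑_{i=1}^{n} ‖T i x‖` as a seminorm on `X`, which makes the
general results on families of seminorms available; it is zero for `n = 0`. -/
noncomputable def avgSeminorm (T : ℕ → X →L[ℝ] Y) (n : ℕ) : Seminorm ℝ X :=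
  Seminorm.of (fun x => avg T x n)
    (fun x y => by
      simp only [avg, ← add_div, ← Finset.sum_add_distrib, map_add]
      gcongr
      exact norm_add_le _ _)
    (fun c x => by simp only [avg, map_smul, norm_smul, ← Finset.mul_sum, mul_div_assoc])

variable {T : ℕ → X →L[ℝ] Y}

theorem continuous_avgSeminorm (n : ℕ) : Continuous (avgSeminorm T n) := by
  change Continuous fun x => (∑ i ∈ Finset.Icc 1 n, ‖T i x‖) / n
  fun_prop

theorem msup_eq_asup_sub (x y : X) : msup T x y = asup T (x - y) := by
  simp only [msup, asup, mavg, avg, map_sub]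

theorem asup_eq_top_iff {x : X} :
    asup T x = ⊤ ↔ ¬ BddAbove (Set.range fun n => avgSeminorm T n x) :=
  limsup_coe_eq_top_iff.trans
    (not_congr ⟨IsBoundedUnder.bddAbove_range, BddAbove.isBoundedUnder_of_range⟩)

theorem asup_smul_eq_top {c : ℝ} (hc : c ≠ 0) {x : X} (hx : asup T x = ⊤) :
    asup T (c • x) = ⊤ := by
  rwa [asup_eq_top_iff, bddAbove_range_seminorm_smul_iff _ hc, ← asup_eq_top_iff]

theorem exists_one_le_lt_avg_of_lt_asup {x : X} {R : ℝ} (h : (R : EReal) < asup T x) :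
    ∃ n, 1 ≤ n ∧ R < avg T x n := by
  obtain ⟨n, hR, hn⟩ := ((frequently_lt_of_lt_limsup (by isBoundedDefault) h).and_eventually
    (eventually_ge_atTop 1)).exists
  exact ⟨n, hn, EReal.coe_lt_coe_iff.1 hR⟩

theorem residual_setOf_asup_eq_top {s : Set X} (hs : Bornology.IsBounded s)
    (h : ∀ R : ℝ, ∃ n, ∃ x ∈ s, R < avg T x n) : {x | asup T x = ⊤} ∈ residual X := by
  simp only [asup_eq_top_iff]
  exact residual_setOf_not_bddAbove_range_seminorm
    (fun n => (continuous_avgSeminorm n).lowerSemicontinuous)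
    (NormedSpace.isVonNBounded_of_isBounded ℝ hs) h

end Average

section MeanSensitive

variable {T : ℕ → X →L[ℝ] Y}

theorem meanSensitive_iff_forall_exists_norm_lt :
    MeanSensitive T ↔
      ∃ δ : ℝ, 0 < δ ∧ ∀ ε : ℝ, 0 < ε → ∃ z : X, ‖z‖ < ε ∧ (δ : EReal) < asup T z := by
  simp only [MeanSensitive, msup_eq_asup_sub]
  refine exists_congr fun δ => and_congr_right fun _ => ⟨fun h ε hε => ?_, fun h x ε hε => ?_⟩
  · obtain ⟨y, hy⟩ := h 0 ε hε
    exact ⟨0 - y, hy⟩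
  · obtain ⟨z, hz⟩ := h ε hε
    exact ⟨x - z, by rwa [sub_sub_cancel]⟩

theorem meanSensitive_of_asup_eq_top {x : X} (hx : asup T x = ⊤) : MeanSensitive T := by
  refine meanSensitive_iff_forall_exists_norm_lt.2 ⟨1, one_pos, fun ε hε => ?_⟩
  obtain ⟨c, hc_pos, hc⟩ := exists_pos_mul_lt hε ‖x‖
  refine ⟨c • x, ?_, ?_⟩
  · rwa [norm_smul, Real.norm_of_nonneg hc_pos.le, mul_comm]
  · exact asup_smul_eq_top hc_pos.ne' hx ▸ EReal.coe_lt_top 1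

theorem MeanSensitive.exists_tendsto_zero_forall_lt_avg (h : MeanSensitive T) :
    ∃ δ : ℝ, 0 < δ ∧ ∃ (y : ℕ → X) (N : ℕ → ℕ),
      (∀ k, 1 ≤ N k) ∧ Tendsto y atTop (𝓝 0) ∧ ∀ k, δ < avg T (y k) (N k) := by
  obtain ⟨δ, hδ, h_small⟩ := meanSensitive_iff_forall_exists_norm_lt.1 h
  choose y hy_norm hy_asup using fun k : ℕ => h_small (1 / ((k : ℝ) + 1)) Nat.one_div_pos_of_nat
  choose N hN h_avg using fun k => exists_one_le_lt_avg_of_lt_asup (hy_asup k)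
  exact ⟨δ, hδ, y, N, hN,
    squeeze_zero_norm (fun k => (hy_norm k).le) tendsto_one_div_add_atTop_nhds_zero_nat, h_avg⟩

end MeanSensitive

theorem meanSensitive_tfae_general [BaireSpace (X × X)] (T : ℕ → X →L[ℝ] Y) :
    List.TFAE [
      MeanSensitive T,
      ∃ x : X, asup T x = ⊤,
      {x : X | asup T x = ⊤} ∈ residual X,
      {p : X × X | asup T (p.1 - p.2) = ⊤} ∈ residual (X × X),
      ∃ (y : ℕ → X) (N : ℕ → ℕ) (M : ℝ), (∀ k, ‖y k‖ ≤ M) ∧ (∀ k, 1 ≤ N k) ∧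
        ∀ R : ℝ, ∃ k, R < avg T (y k) (N k),
      ∃ (y : ℕ → X) (N : ℕ → ℕ), (∀ k, 1 ≤ N k) ∧
        Filter.Tendsto y Filter.atTop (nhds 0) ∧
        (0 : EReal) < Filter.liminf (fun k => (avg T (y k) (N k) : EReal)) Filter.atTop] := by
  tfae_have 2 → 1 := fun ⟨_, hx⟩ => meanSensitive_of_asup_eq_top hx
  tfae_have 1 → 6 := fun h => by
    obtain ⟨δ, hδ, y, N, hN, hy, h_avg⟩ := h.exists_tendsto_zero_forall_lt_avg
    refine ⟨y, N, hN, hy, (EReal.coe_pos.2 hδ).trans_le (le_liminf_of_le (by isBoundedDefault) ?_)⟩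
    exact .of_forall fun k => EReal.coe_le_coe_iff.2 (h_avg k).le
  tfae_have 6 → 5 := fun ⟨y, N, hN, hy, h_liminf⟩ => by
    obtain ⟨c, hc, hc_lt⟩ := EReal.lt_iff_exists_real_btwn.1 h_liminf
    have h_avg : ∀ᶠ k in atTop, c ≤ avgSeminorm T (N k) (y k) :=
      (eventually_lt_of_lt_liminf hc_lt).mono fun k hk => (EReal.coe_lt_coe_iff.1 hk).le
    have h_top := tendsto_seminorm_normalize_atTop (EReal.coe_pos.1 hc) hy h_avg
    exact ⟨_, N, 1, fun k => norm_normalize_le_one (y k), hN,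
      fun R => (h_top.eventually_gt_atTop R).exists⟩
  tfae_have 5 → 3 := fun ⟨y, N, M, hy, _, h_unbdd⟩ =>
    residual_setOf_asup_eq_top (isBounded_iff_forall_norm_le.2 ⟨M, Set.forall_mem_range.2 hy⟩)
      fun R => (h_unbdd R).imp' N fun k hk => ⟨y k, ⟨k, rfl⟩, hk⟩
  tfae_have 3 → 4 := fun h =>
    tendsto_residual_of_isOpenMap continuous_sub isOpenMap_fst_sub_snd h
  tfae_have 4 → 2 := fun h => (dense_of_mem_residual h).nonempty.imp' _ fun _ hp => hp
  tfae_finish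

/-- **Characterizations of mean sensitivity** for a sequence of bounded linear
operators from a Banach space to a normed space. -/
theorem meanSensitive_tfae [CompleteSpace X] (T : ℕ → X →L[ℝ] Y) :
    List.TFAE [
      MeanSensitive T,
      ∃ x : X, asup T x = ⊤,
      {x : X | asup T x = ⊤} ∈ residual X,
      {p : X × X | asup T (p.1 - p.2) = ⊤} ∈ residual (X × X),
      ∃ (y : ℕ → X) (N : ℕ → ℕ) (M : ℝ), (∀ k, ‖y k‖ ≤ M) ∧ (∀ k, 1 ≤ N k) ∧
        ∀ R : ℝ, ∃ k, R < avg T (y k) (N k),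
      ∃ (y : ℕ → X) (N : ℕ → ℕ), (∀ k, 1 ≤ N k) ∧
        Filter.Tendsto y Filter.atTop (nhds 0) ∧
        (0 : EReal) < Filter.liminf (fun k => (avg T (y k) (N k) : EReal)) Filter.atTop] :=
  meanSensitive_tfae_general T
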